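/- arXiv:0905.1863 — 2 statements merged into one kernel-verified Lean document; each statement's English description precedes it below -/
import Mathlib

section
/- Let d = 1, c > 0, and let g : ℝ → ℝ be bounded and smooth. Define v(t,x) := E[g(x + √(1+2c)·W_{T−t})] for (t,x) ∈ [0,T]×ℝ, where W_s denotes a centered Gaussian random variable with variance s, and assume that the odd spatial derivatives of v are bounded uniformly in the order, i.e. sup_{k ≥ 0} sup_{t < T, x} |∂_x^{2k+1} v(t,x)| < ∞. For n ∈ ℕ set h := T/n, t_i := i·h, and define the scheme v^h by v^h(t_n,·) := g and v^h(t_{i−1}, x) := E[v^h(t_i, x + W_h)] + c·h·E[v^h(t_i, x + W_h)·(W_h² − h)/h²] for i = n,…,1. Then limsup_{n→∞} h^{−1/2} · max_{0 ≤ i ≤ n} sup_{x ∈ ℝ} |v^h(t_i,x) − v(t_i,x)| < ∞. -/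
/-!
The bound on the odd derivatives of `v(t, ·)`, uniform in the order, gives a bound `K` on all of its
derivatives, uniform in `t < T` (`derivBdd_of_odd`; smoothness is `contDiff_gaussOp_of_bounded`).
For large `c` the scheme amplifies high frequencies and is not stable in the supremum norm, so the
error is measured by the supremum of all derivatives (`DerivBdd`). The Gaussian operators commute
with differentiation, so for this norm it suffices to estimate their values.

One step of the scheme is `f ↦ E[f(x + √h Z) (1 - c + c Z²)]` and the exact evolution over time `h`
is `f ↦ E[f(x + √((1+2c)h) Z)]`, with `Z` standard Gaussian. Taylor expansion of order two gives
stability with factor `1 + O(h)` (`DerivBdd.gaussOp_stable`). In the expansion of order four both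
operators equal `f + (1+2c)(h/2) ∂²f + O(h²)` (`DerivBdd.gaussOp_consistent`). Summing the local
errors gives a global error `O(h)` (`scheme_error`), hence `O(√h)`.

The derivatives of `v` are controlled only for `t < T`, so this argument is applied with the
terminal datum `v(T - ε, ·)` in place of `g`, with constants independent of `ε`, and `ε → 0` is
taken by dominated convergence (`tendsto_linScheme`).
-/

open MeasureTheory ProbabilityTheory Real

noncomputable section

/-- The solution of the linear PDE: `v(t,x) = E[g(x + √(1+2c) W_{T−t})]`. -/
def vlin (c T : ℝ) (g : ℝ → ℝ) (t x : ℝ) : ℝ :=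
  ∫ w, g (x + Real.sqrt (1 + 2 * c) * w) ∂gaussianReal 0 (T - t).toNNReal

/-- The linear backward scheme with `k` steps remaining before the horizon:
`u_0 = g` and `u_{k+1}(x) = E[u_k(x+W_h)] + c h E[u_k(x+W_h)(W_h²−h)/h²]`. -/
def linScheme (c h : ℝ) (g : ℝ → ℝ) : ℕ → ℝ → ℝ
  | 0 => g
  | (k + 1) => fun x =>
      (∫ w, linScheme c h g k (x + w) ∂gaussianReal 0 h.toNNReal)
        + c * h * ∫ w, linScheme c h g k (x + w) * ((w ^ 2 - h) / h ^ 2)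
            ∂gaussianReal 0 h.toNNReal

/-! ### Functions with uniformly bounded derivatives, and Taylor estimates -/

/-- `f` is smooth and all its derivatives, of order `0` included, are bounded by the same
constant `K`. -/
structure DerivBdd (f : ℝ → ℝ) (K : ℝ) : Prop where
  smooth : ContDiff ℝ (⊤ : ℕ∞) f
  bound : ∀ (j : ℕ) (x : ℝ), |iteratedDeriv j f x| ≤ K

namespace DerivBdd

variable {f g : ℝ → ℝ} {K L : ℝ}

lemma abs_le (hf : DerivBdd f K) (x : ℝ) : |f x| ≤ K := by
  simpa using hf.bound 0 x

lemma nonneg (hf : DerivBdd f K) : 0 ≤ K := (abs_nonneg _).trans (hf.abs_le 0)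

lemma differentiable (hf : DerivBdd f K) : Differentiable ℝ f :=
  hf.smooth.differentiable (by simp)

lemma derivBdd_deriv (hf : DerivBdd f K) : DerivBdd (deriv f) K where
  smooth := ((contDiff_infty_iff_deriv).1 hf.smooth).2
  bound j x := by
    rw [← iteratedDeriv_succ']
    exact hf.bound (j + 1) x

lemma add (hf : DerivBdd f K) (hg : DerivBdd g L) : DerivBdd (fun x => f x + g x) (K + L) where
  smooth := hf.smooth.add hg.smooth
  bound j x := by
    have h1 : ContDiffAt ℝ j f x := (hf.smooth.of_le (by exact_mod_cast le_top)).contDiffAt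
    have h2 : ContDiffAt ℝ j g x := (hg.smooth.of_le (by exact_mod_cast le_top)).contDiffAt
    have := iteratedDeriv_add h1 h2
    rw [show (fun x => f x + g x) = f + g from rfl, this]
    exact (abs_add_le _ _).trans (add_le_add (hf.bound j x) (hg.bound j x))

end DerivBdd

/-- One step of the Taylor estimate, without the sharp factor `1 / (n + 1)`, which is not
needed here. -/
lemma abs_le_of_deriv_le {r r' : ℝ → ℝ} {C : ℝ} {n : ℕ} (hC : 0 ≤ C) (h0 : r 0 = 0)
    (hr : ∀ w, HasDerivAt r (r' w) w) (hb : ∀ w, |r' w| ≤ C * |w| ^ n) (w : ℝ) :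
    |r w| ≤ C * |w| ^ (n + 1) := by
  have := (convex_segment (𝕜 := ℝ) (0 : ℝ) w).norm_image_sub_le_of_norm_hasDerivWithin_le
    (f := r) (f' := r') (C := C * |w| ^ n) (fun x _ => (hr x).hasDerivWithinAt) (fun x hx => ?_)
    (left_mem_segment ℝ 0 w) (right_mem_segment ℝ 0 w)
  · simpa [h0, pow_succ, mul_assoc] using this
  · rw [Real.norm_eq_abs]
    refine (hb x).trans ?_
    refine mul_le_mul_of_nonneg_left (pow_le_pow_left₀ (abs_nonneg _) ?_ n) hC
    obtain ⟨a, b, ha, hb', hab, rfl⟩ := hx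
    rw [smul_eq_mul, mul_zero, zero_add, smul_eq_mul, abs_mul, abs_of_nonneg hb']
    nlinarith [abs_nonneg w]

namespace DerivBdd

variable {f g : ℝ → ℝ} {K L : ℝ}

lemma hasDerivAt_shift (hf : DerivBdd f K) (x w : ℝ) :
    HasDerivAt (fun w => f (x + w)) (deriv f (x + w)) w := by
  simpa using (hf.differentiable (x + w)).hasDerivAt.comp_const_add x w

lemma taylor_one (hf : DerivBdd f K) (x w : ℝ) : |f (x + w) - f x| ≤ K * |w| ^ 1 := by
  refine abs_le_of_deriv_le (r := fun w => f (x + w) - f x) (n := 0) hf.nonneg (by simp)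
    (fun w => (hf.hasDerivAt_shift x w).sub_const _) (fun w => ?_) w
  simpa using hf.derivBdd_deriv.abs_le _

lemma taylor_two (hf : DerivBdd f K) (x w : ℝ) :
    |f (x + w) - f x - deriv f x * w| ≤ K * |w| ^ 2 := by
  refine abs_le_of_deriv_le (r := fun w => f (x + w) - f x - deriv f x * w) hf.nonneg
    (by simp) (fun w => ?_) (fun w => hf.derivBdd_deriv.taylor_one x w) w
  have := ((hf.hasDerivAt_shift x w).sub_const (f x)).sub
    ((hasDerivAt_id w).const_mul (deriv f x))
  convert! this using 1
  simp

lemma taylor_three (hf : DerivBdd f K) (x w : ℝ) :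
    |f (x + w) - f x - deriv f x * w - deriv (deriv f) x * (w ^ 2 / 2)|
      ≤ K * |w| ^ 3 := by
  refine abs_le_of_deriv_le (r := fun w => f (x + w) - f x - deriv f x * w
      - deriv (deriv f) x * (w ^ 2 / 2)) hf.nonneg
    (by simp) (fun w => ?_) (fun w => hf.derivBdd_deriv.taylor_two x w) w
  have := (((hf.hasDerivAt_shift x w).sub_const (f x)).sub
    ((hasDerivAt_id w).const_mul (deriv f x))).sub
    ((((hasDerivAt_id w).pow 2).div_const 2).const_mul (deriv (deriv f) x))
  convert! this using 1
  simp

lemma taylor_four (hf : DerivBdd f K) (x w : ℝ) :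
    |f (x + w) - f x - deriv f x * w - deriv (deriv f) x * (w ^ 2 / 2)
      - deriv (deriv (deriv f)) x * (w ^ 3 / 6)| ≤ K * |w| ^ 4 := by
  refine abs_le_of_deriv_le (r := fun w => f (x + w) - f x - deriv f x * w
      - deriv (deriv f) x * (w ^ 2 / 2)
      - deriv (deriv (deriv f)) x * (w ^ 3 / 6)) hf.nonneg
    (by simp) (fun w => ?_) (fun w => hf.derivBdd_deriv.taylor_three x w) w
  have := ((((hf.hasDerivAt_shift x w).sub_const (f x)).sub
    ((hasDerivAt_id w).const_mul (deriv f x))).sub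
    ((((hasDerivAt_id w).pow 2).div_const 2).const_mul (deriv (deriv f) x))).sub
    ((((hasDerivAt_id w).pow 3).div_const 6).const_mul
      (deriv (deriv (deriv f)) x))
  convert! this using 1
  simp only [id, Nat.cast_ofNat]
  ring

end DerivBdd

/-! ### Moments of the standard Gaussian -/

lemma integrable_pow_gaussian (n : ℕ) :
    Integrable (fun z : ℝ => z ^ n) (gaussianReal 0 1) := by
  have := (memLp_id_gaussianReal (μ := 0) (v := 1) n).integrable_norm_pow'
  refine this.mono' (by fun_prop) (.of_forall fun z => by simp)

lemma integral_odd_gaussian {φ : ℝ → ℝ} (hφ : ∀ z, φ (-z) = -φ z) :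
    ∫ z, φ z ∂gaussianReal 0 1 = 0 := by
  have h : ∫ z, φ (-z) ∂gaussianReal 0 1 = ∫ z, φ z ∂gaussianReal 0 1 := by
    conv_rhs => rw [← neg_zero, ← gaussianReal_map_neg]
    exact ((MeasurableEquiv.neg ℝ).measurableEmbedding.integral_map φ).symm
  simp only [hφ, integral_neg] at h
  linarith

lemma integral_sq_gaussian : ∫ z : ℝ, z ^ 2 ∂gaussianReal 0 1 = 1 := by
  have := variance_fun_id_gaussianReal (μ := 0) (v := 1)
  rw [variance_eq_integral (by fun_prop)] at this
  simpa using this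

lemma integral_four_gaussian : ∫ z : ℝ, z ^ 4 ∂gaussianReal 0 1 = 3 := by
  have h := iteratedDeriv_mgf_zero (X := fun z : ℝ => z) (μ := gaussianReal 0 1) (by simp) 4
  rw [mgf_fun_id_gaussianReal] at h
  have e (t : ℝ) : HasDerivAt (fun t : ℝ => rexp (0 * t + (1 : NNReal) * t ^ 2 / 2))
      (rexp (0 * t + (1 : NNReal) * t ^ 2 / 2) * t) t := by
    have := ((((hasDerivAt_id t).const_mul 0).add
      ((((hasDerivAt_id t).pow 2).const_mul ((1 : NNReal) : ℝ)).div_const 2))).exp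
    convert! this using 1
    simp
  set E : ℝ → ℝ := fun t : ℝ => rexp (0 * t + (1 : NNReal) * t ^ 2 / 2) with hE
  have d1 : deriv E = fun t => E t * t := funext fun t => (e t).deriv
  have d2 : deriv (fun t => E t * t) = fun t => E t * (1 + t ^ 2) := funext fun t => by
    refine ((e t).mul (hasDerivAt_id t)).deriv.trans ?_; simp [hE]; ring
  have d3 : deriv (fun t => E t * (1 + t ^ 2)) = fun t => E t * (3 * t + t ^ 3) :=
    funext fun t => by
      refine ((e t).mul (((hasDerivAt_id t).pow 2).const_add 1)).deriv.trans ?_; simp [hE]; ring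
  have d4 : deriv (fun t => E t * (3 * t + t ^ 3)) = fun t => E t * (3 + 6 * t ^ 2 + t ^ 4) :=
    funext fun t => by
      refine ((e t).mul (((hasDerivAt_id t).const_mul 3).add
        ((hasDerivAt_id t).pow 3))).deriv.trans ?_
      simp [hE]; ring
  rw [iteratedDeriv_eq_iterate] at h
  simp only [Function.iterate_succ, Function.comp_apply, Function.iterate_zero, id, d1, d2, d3,
    d4] at h
  simpa [hE] using h.symm

/-! ### Gaussian operators -/

/-- The operator `f ↦ E[f(x + s Z) (a + b Z²)]`, with `Z` a standard Gaussian. The Gaussian average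
with variance `s²` is the case `a = 1`, `b = 0`; one step of the scheme is the case `a = 1 - c`,
`b = c`, `s = √h`. -/
def gaussOp (a b s : ℝ) (f : ℝ → ℝ) (x : ℝ) : ℝ :=
  ∫ z, f (x + s * z) * (a + b * z ^ 2) ∂gaussianReal 0 1

lemma integrable_weight (a b : ℝ) (n : ℕ) :
    Integrable (fun z : ℝ => |z| ^ n * |a + b * z ^ 2|) (gaussianReal 0 1) := by
  have h : Integrable (fun z : ℝ => a * z ^ n + b * z ^ (n + 2)) (gaussianReal 0 1) :=
    ((integrable_pow_gaussian n).const_mul a).add ((integrable_pow_gaussian (n + 2)).const_mul b)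
  refine h.abs.congr (.of_forall fun z => ?_)
  simp only
  rw [← abs_pow, ← abs_mul]
  congr 1
  ring

lemma integrable_gaussOp {f : ℝ → ℝ} {K : ℝ} (a b s x : ℝ) (hf : Continuous f)
    (hK : ∀ x, |f x| ≤ K) :
    Integrable (fun z => f (x + s * z) * (a + b * z ^ 2)) (gaussianReal 0 1) := by
  refine ((integrable_weight a b 0).const_mul K).mono' (by fun_prop) (.of_forall fun z => ?_)
  rw [Real.norm_eq_abs, abs_mul, pow_zero, one_mul]
  exact mul_le_mul_of_nonneg_right (hK _) (abs_nonneg _)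

lemma gaussOp_sub {f g : ℝ → ℝ} {K L : ℝ} (a b s x : ℝ) (hf : Continuous f)
    (hK : ∀ x, |f x| ≤ K) (hg : Continuous g) (hL : ∀ x, |g x| ≤ L) :
    gaussOp a b s (fun y => f y - g y) x = gaussOp a b s f x - gaussOp a b s g x := by
  rw [gaussOp, gaussOp, gaussOp, ← integral_sub (integrable_gaussOp a b s x hf hK)
    (integrable_gaussOp a b s x hg hL)]
  simp only [sub_mul]

lemma abs_gaussOp_le {f : ℝ → ℝ} {K : ℝ} (a b s x : ℝ) (hK : ∀ x, |f x| ≤ K) :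
    |gaussOp a b s f x| ≤ K * ∫ z, |a + b * z ^ 2| ∂gaussianReal 0 1 := by
  rw [← integral_const_mul, ← Real.norm_eq_abs]
  refine norm_integral_le_of_norm_le
    (by simpa using (integrable_weight a b 0).const_mul K) (.of_forall fun z => ?_)
  rw [Real.norm_eq_abs, abs_mul]
  exact mul_le_mul_of_nonneg_right (hK _) (abs_nonneg _)

lemma continuous_gaussOp {f : ℝ → ℝ} {K : ℝ} (a b s : ℝ) (hf : Continuous f)
    (hK : ∀ x, |f x| ≤ K) : Continuous (gaussOp a b s f) := by
  refine continuous_of_dominated (bound := fun z => K * (|z| ^ 0 * |a + b * z ^ 2|))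
    (fun x => by fun_prop) (fun x => .of_forall fun z => ?_)
    ((integrable_weight a b 0).const_mul K) (.of_forall fun z => by fun_prop)
  rw [Real.norm_eq_abs, abs_mul, pow_zero, one_mul]
  exact mul_le_mul_of_nonneg_right (hK _) (abs_nonneg _)

namespace DerivBdd

variable {f : ℝ → ℝ} {K : ℝ}

lemma hasDerivAt_gaussOp (hf : DerivBdd f K) (a b s x : ℝ) :
    HasDerivAt (gaussOp a b s f) (gaussOp a b s (deriv f) x) x := by
  have hc : Continuous f := hf.smooth.continuous
  have hc' : Continuous (deriv f) := hf.derivBdd_deriv.smooth.continuous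
  refine (hasDerivAt_integral_of_dominated_loc_of_deriv_le (s := Set.univ)
    (F := fun x z => f (x + s * z) * (a + b * z ^ 2))
    (F' := fun x z => deriv f (x + s * z) * (a + b * z ^ 2))
    (bound := fun z => K * (|z| ^ 0 * |a + b * z ^ 2|)) Filter.univ_mem
    (.of_forall fun x => by fun_prop) (integrable_gaussOp a b s x hc hf.abs_le)
    (by fun_prop) (.of_forall fun z x _ => ?_) ((integrable_weight a b 0).const_mul K)
    (.of_forall fun z x _ => ?_)).2
  · rw [Real.norm_eq_abs, abs_mul, pow_zero, one_mul]
    exact mul_le_mul_of_nonneg_right (hf.derivBdd_deriv.abs_le _) (abs_nonneg _)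
  · exact ((hf.differentiable _).hasDerivAt.comp_add_const x (s * z)).mul_const _

lemma derivBdd_iteratedDeriv (hf : DerivBdd f K) (j : ℕ) : DerivBdd (iteratedDeriv j f) K := by
  induction j with
  | zero => simpa using hf
  | succ j ih => rw [iteratedDeriv_succ]; exact ih.derivBdd_deriv

lemma iteratedDeriv_gaussOp (hf : DerivBdd f K) (a b s : ℝ) (j : ℕ) :
    iteratedDeriv j (gaussOp a b s f) = gaussOp a b s (iteratedDeriv j f) := by
  induction j with
  | zero => simp
  | succ j ih =>
    rw [iteratedDeriv_succ, ih, iteratedDeriv_succ]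
    exact funext fun x => ((hf.derivBdd_iteratedDeriv j).hasDerivAt_gaussOp a b s x).deriv

lemma contDiff_gaussOp (hf : DerivBdd f K) (a b s : ℝ) :
    ContDiff ℝ (⊤ : ℕ∞) (gaussOp a b s f) := by
  refine contDiff_of_differentiable_iteratedDeriv fun m _ => ?_
  rw [hf.iteratedDeriv_gaussOp]
  exact fun x => ((hf.derivBdd_iteratedDeriv m).hasDerivAt_gaussOp a b s x).differentiableAt

/-- If `z ↦ f (x + s z)` is a cubic polynomial up to `B |z|ⁿ`, then `gaussOp a b s f x` is computed
from the moments `1, 0, 1, 0, 3, 0` of the Gaussian, up to the corresponding error. -/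
lemma gaussOp_sub_poly (hf : DerivBdd f K) (a b s x c₀ c₁ c₂ c₃ B : ℝ) (n : ℕ)
    (h : ∀ z, |f (x + s * z) - (c₀ + c₁ * z + c₂ * z ^ 2 + c₃ * z ^ 3)| ≤ B * |z| ^ n) :
    |gaussOp a b s f x - (c₀ * (a + b) + c₂ * (a + 3 * b))|
      ≤ B * ∫ z, |z| ^ n * |a + b * z ^ 2| ∂gaussianReal 0 1 := by
  have I := integrable_pow_gaussian
  -- The polynomial is split into its even part and its odd part, whose integral vanishes.
  have he : Integrable (fun z : ℝ => c₀ * a + (c₀ * b + c₂ * a) * z ^ 2 + c₂ * b * z ^ 4)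
      (gaussianReal 0 1) :=
    ((integrable_const _).add ((I 2).const_mul _)).add ((I 4).const_mul _)
  have ho : Integrable (fun z : ℝ => c₁ * a * z ^ 1 + (c₁ * b + c₃ * a) * z ^ 3 + c₃ * b * z ^ 5)
      (gaussianReal 0 1) :=
    (((I 1).const_mul _).add ((I 3).const_mul _)).add ((I 5).const_mul _)
  have hp : ∀ z : ℝ, (c₀ + c₁ * z + c₂ * z ^ 2 + c₃ * z ^ 3) * (a + b * z ^ 2)
      = (c₀ * a + (c₀ * b + c₂ * a) * z ^ 2 + c₂ * b * z ^ 4)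
        + (c₁ * a * z ^ 1 + (c₁ * b + c₃ * a) * z ^ 3 + c₃ * b * z ^ 5) := fun z => by ring
  have hpi : Integrable (fun z : ℝ => (c₀ + c₁ * z + c₂ * z ^ 2 + c₃ * z ^ 3) * (a + b * z ^ 2))
      (gaussianReal 0 1) := by
    simp only [hp]
    exact he.add ho
  have hint : ∫ z : ℝ, (c₀ + c₁ * z + c₂ * z ^ 2 + c₃ * z ^ 3) * (a + b * z ^ 2)
      ∂gaussianReal 0 1 = c₀ * (a + b) + c₂ * (a + 3 * b) := by
    simp only [hp]
    have h0 : ∫ z : ℝ, (c₁ * a * z ^ 1 + (c₁ * b + c₃ * a) * z ^ 3 + c₃ * b * z ^ 5)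
        ∂gaussianReal 0 1 = 0 := integral_odd_gaussian fun z => by ring
    have h2 : Integrable (fun z : ℝ => c₀ * a + (c₀ * b + c₂ * a) * z ^ 2) (gaussianReal 0 1) :=
      (integrable_const _).add ((I 2).const_mul _)
    rw [integral_add he ho, h0, integral_add h2 ((I 4).const_mul _),
      integral_add (integrable_const _) ((I 2).const_mul _), integral_const_mul _ (fun z : ℝ => z ^ 2),
      integral_const_mul _ (fun z : ℝ => z ^ 4), integral_sq_gaussian, integral_four_gaussian,
      integral_const]
    simp
    ring
  rw [← hint, gaussOp, ← integral_sub
    (integrable_gaussOp a b s x hf.smooth.continuous hf.abs_le) hpi, ← integral_const_mul,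
    ← Real.norm_eq_abs]
  refine norm_integral_le_of_norm_le ((integrable_weight a b n).const_mul B)
    (.of_forall fun z => ?_)
  rw [← sub_mul, Real.norm_eq_abs, abs_mul, ← mul_assoc]
  exact mul_le_mul_of_nonneg_right (h z) (abs_nonneg _)

lemma gaussOp_two (hf : DerivBdd f K) (a b s x : ℝ) :
    |gaussOp a b s f x - f x * (a + b)|
      ≤ K * s ^ 2 * ∫ z, |z| ^ 2 * |a + b * z ^ 2| ∂gaussianReal 0 1 := by
  have := hf.gaussOp_sub_poly a b s x (f x) (deriv f x * s) 0 0 (K * s ^ 2) 2 fun z => by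
    have := hf.taylor_two x (s * z)
    rw [abs_mul, mul_pow, sq_abs s, ← mul_assoc K] at this
    convert! this using 2
    ring
  simpa using this

lemma gaussOp_four (hf : DerivBdd f K) (a b s x : ℝ) :
    |gaussOp a b s f x - (f x * (a + b) + deriv (deriv f) x * s ^ 2 / 2 * (a + 3 * b))|
      ≤ K * s ^ 4 * ∫ z, |z| ^ 4 * |a + b * z ^ 2| ∂gaussianReal 0 1 := by
  refine hf.gaussOp_sub_poly a b s x (f x) (deriv f x * s) _
    (deriv (deriv (deriv f)) x * s ^ 3 / 6) (K * s ^ 4) 4 fun z => ?_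
  have := hf.taylor_four x (s * z)
  rw [abs_mul, mul_pow |s|, show |s| ^ 4 = s ^ 4 from (even_two_mul 2).pow_abs s,
    ← mul_assoc K] at this
  convert! this using 2
  ring

end DerivBdd

/-! ### The equation and the scheme in terms of `gaussOp` -/

lemma integral_gaussian_scale {φ : ℝ → ℝ} (hφ : Continuous φ) {h : ℝ} (hh : 0 ≤ h) :
    ∫ w, φ w ∂gaussianReal 0 h.toNNReal = ∫ z, φ (√h * z) ∂gaussianReal 0 1 := by
  have : gaussianReal 0 h.toNNReal = (gaussianReal 0 1).map (√h * ·) := by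
    rw [gaussianReal_map_const_mul]
    congr 1
    · simp
    · ext
      simp [hh, Real.sq_sqrt hh]
  rw [this, integral_map (by fun_prop) (by fun_prop)]

lemma vlin_eq_gaussOp {c T : ℝ} {g : ℝ → ℝ} (hg : Continuous g) {t : ℝ}
    (ht : t ≤ T) : vlin c T g t = gaussOp 1 0 (√(1 + 2 * c) * √(T - t)) g := by
  funext x
  rw [vlin, gaussOp, integral_gaussian_scale (φ := fun w => g (x + √(1 + 2 * c) * w))
    (by fun_prop) (by linarith)]
  simp [mul_assoc]

lemma linScheme_succ {c h : ℝ} (hh : 0 < h) {g : ℝ → ℝ} {k : ℕ} {K : ℝ}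
    (hu : Continuous (linScheme c h g k)) (hK : ∀ x, |linScheme c h g k x| ≤ K) :
    linScheme c h g (k + 1) = gaussOp (1 - c) c √h (linScheme c h g k) := by
  funext x
  rw [linScheme]
  simp only
  rw [integral_gaussian_scale (φ := fun w => linScheme c h g k (x + w)) (by fun_prop) hh.le,
    integral_gaussian_scale (φ := fun w => linScheme c h g k (x + w) * ((w ^ 2 - h) / h ^ 2))
      (by fun_prop) hh.le, ← integral_const_mul, ← integral_add, gaussOp]
  · congr 1 with z
    rw [mul_pow, Real.sq_sqrt hh.le]
    field_simp
    ring
  · simpa using integrable_gaussOp 1 0 √h x hu hK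
  · have := integrable_gaussOp (-c) c √h x hu hK
    refine this.congr (.of_forall fun z => ?_)
    simp only
    rw [mul_pow, Real.sq_sqrt hh.le]
    field_simp
    ring

lemma gaussOp_eq_integral {g : ℝ → ℝ} (hg : Continuous g) {p : ℝ} (hp : 0 ≤ p) (x : ℝ) :
    gaussOp 1 0 √p g x = ∫ w, g (x + w) ∂gaussianReal 0 p.toNNReal := by
  rw [integral_gaussian_scale (φ := fun w => g (x + w)) (by fun_prop) hp, gaussOp]
  simp

/-- The semigroup property of Gaussian averages. -/
lemma gaussOp_gaussOp {g : ℝ → ℝ} {K : ℝ} (hg : Continuous g) (hK : ∀ x, |g x| ≤ K)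
    {p q : ℝ} (hp : 0 ≤ p) (hq : 0 ≤ q) :
    gaussOp 1 0 √q (gaussOp 1 0 √p g) = gaussOp 1 0 √(q + p) g := by
  funext x
  rw [gaussOp_eq_integral (continuous_gaussOp 1 0 _ hg hK) hq,
    gaussOp_eq_integral hg (add_nonneg hq hp), Real.toNNReal_add hq hp]
  conv_rhs => rw [← add_zero (0 : ℝ), ← gaussianReal_conv_gaussianReal]
  rw [integral_conv]
  · simp only [gaussOp_eq_integral hg hp, add_assoc]
  · rw [gaussianReal_conv_gaussianReal]
    refine (integrable_const K).mono' (by fun_prop) (.of_forall fun z => hK _)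

/-- Gaussian averages of a merely bounded continuous function are smooth. Completing the square,
the average of `g` is `exp (-x² / 2p)` times the Laplace transform at `x / p` of `g` against the
Gaussian; adding the constant `K` to `g` turns this into the moment generating function of a
positive measure, which is analytic. -/
lemma contDiff_gaussOp_of_bounded {g : ℝ → ℝ} {K : ℝ} (hg : Continuous g) (hK : ∀ x, |g x| ≤ K)
    {p : ℝ} (hp : 0 < p) : ContDiff ℝ (⊤ : ℕ∞) (gaussOp 1 0 √p g) := by
  set v : NNReal := p.toNNReal with hv
  have hvp : (v : ℝ) = p := Real.coe_toNNReal p hp.le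
  have hv0 : v ≠ 0 := fun h => hp.ne' (by rw [← hvp, h]; rfl)
  set γ := gaussianReal 0 v with hγ
  set μ : Measure ℝ := γ.withDensity (fun y => ENNReal.ofReal (g y + K)) with hμ
  have hI (t : ℝ) : Integrable (fun y => rexp (t * y)) γ := integrable_exp_mul_gaussianReal t
  have hIg (t : ℝ) : Integrable (fun y => rexp (t * y) * g y) γ := by
    refine ((hI t).mul_const K).mono' (by fun_prop) (.of_forall fun y => ?_)
    rw [Real.norm_eq_abs, abs_mul, abs_of_pos (exp_pos _)]
    exact mul_le_mul_of_nonneg_left (hK y) (exp_pos _).le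
  have hle : μ ≤ ENNReal.ofReal (2 * K) • γ := by
    rw [← withDensity_const]
    refine withDensity_mono (.of_forall fun y => ENNReal.ofReal_le_ofReal ?_)
    linarith [(abs_le.1 (hK y)).2]
  have hIμ (t : ℝ) : Integrable (fun y => rexp (t * id y)) μ :=
    ((hI t).smul_measure ENNReal.ofReal_ne_top).mono_measure hle
  have hset : integrableExpSet id μ = Set.univ := Set.eq_univ_of_forall hIμ
  have hmgf (t : ℝ) : mgf id μ t = ∫ y, rexp (t * y) * g y ∂γ + K * mgf id γ t := by
    rw [mgf, hμ, integral_withDensity_eq_integral_toReal_smul (by fun_prop) (by simp), mgf,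
      ← integral_const_mul]
    simp only [id]
    rw [← integral_add (hIg t) ((hI t).const_mul K)]
    congr 1 with y
    rw [ENNReal.toReal_ofReal (by linarith [(abs_le.1 (hK y)).1]), smul_eq_mul]
    ring
  have key : gaussOp 1 0 √p g = fun x => rexp (-x ^ 2 / (2 * p)) *
      (mgf id μ (x / p) - K * mgf id γ (x / p)) := by
    funext x
    rw [hmgf, add_sub_cancel_right, gaussOp_eq_integral hg hp.le, ← hv,
      ← integral_map (φ := fun w => x + w) (f := g) (by fun_prop) (by fun_prop),
      gaussianReal_map_const_add, zero_add, integral_gaussianReal_eq_integral_smul hv0, hγ,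
      integral_gaussianReal_eq_integral_smul hv0, ← integral_const_mul]
    congr 1 with y
    simp only [gaussianPDFReal, smul_eq_mul, hvp]
    have : rexp (-(y - x) ^ 2 / (2 * p)) = rexp (-x ^ 2 / (2 * p)) * rexp (-(y - 0) ^ 2 / (2 * p))
        * rexp (x / p * y) := by
      rw [← Real.exp_add, ← Real.exp_add]
      congr 1
      field_simp
      ring
    rw [this]
    ring
  have h1 : ContDiff ℝ (⊤ : ℕ∞) (mgf id μ) := by
    rw [contDiff_iff_contDiffAt]
    exact fun t => (analyticAt_mgf (by simp [hset])).contDiffAt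
  have h2 : ContDiff ℝ (⊤ : ℕ∞) (mgf id γ) := by
    rw [contDiff_iff_contDiffAt]
    exact fun t => (analyticAt_mgf (by simp [hγ])).contDiffAt
  rw [key]
  have h3 : ContDiff ℝ (⊤ : ℕ∞) fun x : ℝ => x / p := by fun_prop
  have h4 := h1.comp h3
  have h5 := h2.comp h3
  simp only [Function.comp_def] at h4 h5
  exact ContDiff.mul (by fun_prop) (h4.sub (contDiff_const.mul h5))

/-- Bounds on the odd derivatives control the even ones of order at least two. -/
lemma derivBdd_of_odd {f : ℝ → ℝ} {M K : ℝ} (hf : ContDiff ℝ (⊤ : ℕ∞) f) (hK : ∀ x, |f x| ≤ K)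
    (hM : ∀ (k : ℕ) (x : ℝ), |iteratedDeriv (2 * k + 1) f x| ≤ M) :
    DerivBdd f (K + 3 * M) := by
  have hK0 : 0 ≤ K := (abs_nonneg _).trans (hK 0)
  have hM0 : 0 ≤ M := (abs_nonneg _).trans (hM 0 0)
  have hd (j : ℕ) (x : ℝ) : HasDerivAt (iteratedDeriv j f) (iteratedDeriv (j + 1) f x) x := by
    rw [iteratedDeriv_succ]
    exact ((hf.differentiable_iteratedDeriv j (by exact_mod_cast WithTop.coe_lt_top j)) x).hasDerivAt
  refine ⟨hf, fun j x => ?_⟩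
  obtain ⟨k, rfl | rfl⟩ := j.even_or_odd'
  · cases k with
    | zero => simpa using (hK x).trans (by linarith)
    | succ k =>
      -- On `[x, x + 1]` the even derivative takes a value at most `2 * M`, being a difference
      -- quotient of the derivative below it, and varies by at most `M`, by the derivative above.
      obtain ⟨ξ, hξ, h1⟩ := exists_hasDerivAt_eq_slope (iteratedDeriv (2 * k + 1) f)
        (iteratedDeriv (2 * k + 1 + 1) f) (show x < x + 1 by linarith)
        (fun y _ => (hd _ y).continuousAt.continuousWithinAt) (fun y _ => hd _ y)
      have h2 := Convex.norm_image_sub_le_of_norm_hasDerivWithin_le (C := M)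
        (fun y _ => (hd (2 * (k + 1)) y).hasDerivWithinAt) (fun y _ => hM (k + 1) y)
        convex_univ (Set.mem_univ ξ) (Set.mem_univ x)
      rw [show 2 * k + 1 + 1 = 2 * (k + 1) by ring, add_sub_cancel_left, div_one] at h1
      rw [Real.norm_eq_abs, Real.norm_eq_abs, h1] at h2
      have h3 : |x - ξ| ≤ 1 := abs_le.2 ⟨by linarith [hξ.2], by linarith [hξ.1]⟩
      have h4 := abs_le.1 (h2.trans (mul_le_of_le_one_right hM0 h3))
      have h5 := abs_le.1 (hM k x)
      have h6 := abs_le.1 (hM k (x + 1))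
      exact abs_le.2 ⟨by linarith [h4.1], by linarith [h4.2]⟩
  · exact (hM k x).trans (by linarith)

/-! ### Stability, consistency and the error estimate -/

/-- One step of the scheme multiplies a common bound on all derivatives by at most
`1 + stabConst c * h`. -/
def stabConst (c : ℝ) : ℝ := ∫ z, |z| ^ 2 * |1 - c + c * z ^ 2| ∂gaussianReal 0 1

/-- The local truncation error of the scheme on functions whose derivatives are all bounded by `K`
is at most `consConst c * K * h²`. -/
def consConst (c : ℝ) : ℝ := (∫ z, |z| ^ 4 * |1 - c + c * z ^ 2| ∂gaussianReal 0 1)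
        + (1 + 2 * c) ^ 2 * ∫ z, |z| ^ 4 * |1 + 0 * z ^ 2| ∂gaussianReal 0 1

lemma stabConst_nonneg (c : ℝ) : 0 ≤ stabConst c := integral_nonneg fun z => by positivity

lemma consConst_nonneg (c : ℝ) : 0 ≤ consConst c :=
  add_nonneg (integral_nonneg fun z => by positivity)
    (mul_nonneg (sq_nonneg _) (integral_nonneg fun z => by positivity))

namespace DerivBdd

variable {f : ℝ → ℝ} {K : ℝ}

lemma gaussOp_stable (hf : DerivBdd f K) (c : ℝ) {h : ℝ} (hh : 0 ≤ h) :
    DerivBdd (gaussOp (1 - c) c √h f)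
      ((1 + stabConst c * h) * K) where
  smooth := hf.contDiff_gaussOp _ _ _
  bound j x := by
    rw [hf.iteratedDeriv_gaussOp]
    have hj := hf.derivBdd_iteratedDeriv j
    have h1 := _root_.abs_le.1 (hj.gaussOp_two (1 - c) c √h x)
    have h2 := _root_.abs_le.1 (hj.abs_le x)
    rw [Real.sq_sqrt hh, sub_add_cancel, mul_one] at h1
    unfold stabConst
    exact _root_.abs_le.2 ⟨by linarith [h1.1], by linarith [h1.2]⟩

/-- The fourth-order expansions of one step of the scheme and of the exact evolution over time `h`
share the terms `f + (1 + 2c) (h / 2) ∂²f`. -/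
lemma gaussOp_consistent (hf : DerivBdd f K) {c : ℝ} (hc : 0 < c) {h : ℝ} (hh : 0 ≤ h) :
    DerivBdd (fun x => gaussOp (1 - c) c √h f x - gaussOp 1 0 √((1 + 2 * c) * h) f x)
      (consConst c * K * h ^ 2) where
  smooth := (hf.contDiff_gaussOp _ _ _).sub (hf.contDiff_gaussOp _ _ _)
  bound j x := by
    have hj := hf.derivBdd_iteratedDeriv j
    have e := iteratedDeriv_sub (n := j) (x := x)
      (((hf.contDiff_gaussOp (1 - c) c √h).of_le (by exact_mod_cast le_top)).contDiffAt)
      (((hf.contDiff_gaussOp 1 0 √((1 + 2 * c) * h)).of_le (by exact_mod_cast le_top)).contDiffAt)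
    rw [hf.iteratedDeriv_gaussOp, hf.iteratedDeriv_gaussOp] at e
    refine (congrArg abs e).trans_le ?_
    have h1 := _root_.abs_le.1 (hj.gaussOp_four (1 - c) c √h x)
    have h2 := _root_.abs_le.1 (hj.gaussOp_four 1 0 √((1 + 2 * c) * h) x)
    have p4 (r : ℝ) : r ^ 4 = (r ^ 2) ^ 2 := by ring
    rw [p4 (√_), Real.sq_sqrt hh] at h1
    rw [p4 (√_), Real.sq_sqrt (by positivity)] at h2
    unfold consConst
    exact _root_.abs_le.2 ⟨by linarith [h1.1, h2.2], by linarith [h1.2, h2.1]⟩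

lemma mono (hf : DerivBdd f K) {L : ℝ} (h : K ≤ L) : DerivBdd f L :=
  ⟨hf.smooth, fun j x => (hf.bound j x).trans h⟩

end DerivBdd

/-- Accumulation of the local errors, when the scheme starts from `v 0` and `v` is the exact
evolution. The error is measured by all its derivatives at once, since the scheme need not be
stable in the supremum norm alone. -/
lemma scheme_error {c h K : ℝ} (hc : 0 < c) (hh : 0 < h) {v : ℕ → ℝ → ℝ}
    (hv : ∀ k, DerivBdd (v k) K)
    (hstep : ∀ k, v (k + 1) = gaussOp 1 0 √((1 + 2 * c) * h) (v k)) (k : ℕ) :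
    DerivBdd (fun x => linScheme c h (v 0) k x - v k x)
      (consConst c * K * h ^ 2 * (k * (1 + stabConst c * h) ^ k)) := by
  have hK := (hv 0).nonneg
  have hC := consConst_nonneg c
  have hS := stabConst_nonneg c
  induction k with
  | zero =>
    refine ⟨by simpa [linScheme] using contDiff_const, fun j x => ?_⟩
    have : iteratedDeriv j (fun _ : ℝ => (0 : ℝ)) x = 0 := by
      simp
    simp [linScheme, this]
  | succ k ih =>
    have hu := ih.add (hv k)
    simp only [sub_add_cancel] at hu
    have e : (fun x => linScheme c h (v 0) (k + 1) x - v (k + 1) x) = fun x =>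
        gaussOp (1 - c) c √h (fun y => linScheme c h (v 0) k y - v k y) x
          + (gaussOp (1 - c) c √h (v k) x - gaussOp 1 0 √((1 + 2 * c) * h) (v k) x) := by
      funext x
      rw [linScheme_succ hh hu.smooth.continuous hu.abs_le, hstep,
        gaussOp_sub _ _ _ _ hu.smooth.continuous hu.abs_le (hv k).smooth.continuous (hv k).abs_le]
      ring
    rw [e]
    refine ((ih.gaussOp_stable c hh.le).add ((hv k).gaussOp_consistent hc hh.le)).mono ?_
    have h1 : 1 ≤ (1 + stabConst c * h) ^ (k + 1) :=
      one_le_pow₀ (by have := mul_nonneg hS hh.le; linarith)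
    have h2 : 0 ≤ consConst c * K * h ^ 2 := by positivity
    have h3 := mul_le_mul_of_nonneg_left h1 h2
    push_cast
    rw [pow_succ _ k] at h3 ⊢
    linarith

lemma continuous_gaussOp_scale {g : ℝ → ℝ} {K : ℝ} (a b x : ℝ) (hg : Continuous g)
    (hK : ∀ x, |g x| ≤ K) : Continuous (fun s => gaussOp a b s g x) := by
  refine continuous_of_dominated (bound := fun z => K * (|z| ^ 0 * |a + b * z ^ 2|))
    (fun x => by fun_prop) (fun x => .of_forall fun z => ?_)
    ((integrable_weight a b 0).const_mul K) (.of_forall fun z => by fun_prop)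
  rw [Real.norm_eq_abs, abs_mul, pow_zero, one_mul]
  exact mul_le_mul_of_nonneg_right (hK _) (abs_nonneg _)

lemma tendsto_gaussOp {F : ℕ → ℝ → ℝ} {f : ℝ → ℝ} {K : ℝ} (hF : ∀ m, Continuous (F m))
    (hK : ∀ m x, |F m x| ≤ K)
    (hlim : ∀ x, Filter.Tendsto (fun m => F m x) Filter.atTop (nhds (f x))) (a b s x : ℝ) :
    Filter.Tendsto (fun m => gaussOp a b s (F m) x) Filter.atTop (nhds (gaussOp a b s f x)) := by
  refine tendsto_integral_of_dominated_convergence (fun z => K * (|z| ^ 0 * |a + b * z ^ 2|))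
    (fun m => by have := hF m; fun_prop) ((integrable_weight a b 0).const_mul K)
    (fun m => .of_forall fun z => ?_) (.of_forall fun z => (hlim _).mul_const _)
  rw [Real.norm_eq_abs, abs_mul, pow_zero, one_mul]
  exact mul_le_mul_of_nonneg_right (hK _ _) (abs_nonneg _)

lemma linScheme_continuous_bounded {c h : ℝ} (hh : 0 < h) {g : ℝ → ℝ} {K : ℝ}
    (hg : Continuous g) (hK : ∀ x, |g x| ≤ K) (k : ℕ) :
    Continuous (linScheme c h g k) ∧ ∀ x, |linScheme c h g k x|
      ≤ K * (∫ z, |1 - c + c * z ^ 2| ∂gaussianReal 0 1) ^ k := by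
  induction k with
  | zero => exact ⟨hg, by simpa [linScheme] using hK⟩
  | succ k ih =>
    rw [linScheme_succ hh ih.1 ih.2, pow_succ, ← mul_assoc]
    exact ⟨continuous_gaussOp _ _ _ ih.1 ih.2, fun x => abs_gaussOp_le _ _ _ _ ih.2⟩

lemma tendsto_linScheme {c h : ℝ} (hh : 0 < h) {F : ℕ → ℝ → ℝ} {f : ℝ → ℝ} {K : ℝ}
    (hF : ∀ m, Continuous (F m)) (hK : ∀ m x, |F m x| ≤ K) (hf : Continuous f)
    (hfK : ∀ x, |f x| ≤ K)
    (hlim : ∀ x, Filter.Tendsto (fun m => F m x) Filter.atTop (nhds (f x))) (k : ℕ) (x : ℝ) :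
    Filter.Tendsto (fun m => linScheme c h (F m) k x) Filter.atTop
      (nhds (linScheme c h f k x)) := by
  induction k generalizing x with
  | zero => exact hlim x
  | succ k ih =>
    have hb (m : ℕ) := linScheme_continuous_bounded (c := c) hh (hF m) (hK m) k
    have hb' := linScheme_continuous_bounded (c := c) hh hf hfK k
    rw [linScheme_succ hh hb'.1 hb'.2]
    simp only [fun m => linScheme_succ hh (hb m).1 (hb m).2]
    exact tendsto_gaussOp (fun m => (hb m).1) (fun m => (hb m).2) ih _ _ _ _

/-- Proposition 3.32 of the paper: in the linear case `F(γ) = c γ`, the scheme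
converges at the rate `√h`:
`limsup_{h→0} h^{−1/2} max_i sup_x |v^h(t_i,·) − v(t_i,·)| < ∞`. -/
theorem linear_case_rate_of_convergence
    (T c : ℝ) (hT : 0 < T) (hc : 0 < c)
    (g : ℝ → ℝ) (hg : ContDiff ℝ (⊤ : ℕ∞) g) (hgbdd : ∃ Cg : ℝ, ∀ x, |g x| ≤ Cg)
    (hodd : ∃ M : ℝ, ∀ k : ℕ, ∀ t : ℝ, t < T → ∀ x : ℝ,
      |iteratedDeriv (2 * k + 1) (fun y => vlin c T g t y) x| ≤ M) :
    ∃ C : ℝ, ∃ N : ℕ, ∀ n : ℕ, N ≤ n → 0 < n → ∀ i : ℕ, i ≤ n → ∀ x : ℝ,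
      |linScheme c (T / n) g (n - i) x - vlin c T g (i * (T / n)) x|
        ≤ C * Real.sqrt (T / n) := by
  obtain ⟨Cg, hCg⟩ := hgbdd
  obtain ⟨M, hM⟩ := hodd
  have hgc : Continuous g := hg.continuous
  have hc2 : 0 ≤ 1 + 2 * c := by linarith
  have hv_eq (t : ℝ) (ht : t ≤ T) : vlin c T g t = gaussOp 1 0 √((1 + 2 * c) * (T - t)) g := by
    rw [vlin_eq_gaussOp hgc ht, Real.sqrt_mul hc2]
  have hv_bdd (t : ℝ) (ht : t ≤ T) (x : ℝ) : |vlin c T g t x| ≤ Cg := by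
    rw [hv_eq t ht]
    simpa using abs_gaussOp_le 1 0 √((1 + 2 * c) * (T - t)) x hCg
  have hv (t : ℝ) (ht : t < T) : DerivBdd (vlin c T g t) (Cg + 3 * M) := by
    refine derivBdd_of_odd ?_ (hv_bdd t ht.le) (fun k x => hM k t ht x)
    rw [hv_eq t ht.le]
    exact contDiff_gaussOp_of_bounded hgc hCg (by have := sub_pos.2 ht; positivity)
  have hv_step (t h : ℝ) (ht : t ≤ T) (hh : 0 ≤ h) :
      vlin c T g (t - h) = gaussOp 1 0 √((1 + 2 * c) * h) (vlin c T g t) := by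
    rw [hv_eq t ht, hv_eq (t - h) (by linarith), gaussOp_gaussOp hgc hCg
      (mul_nonneg hc2 (sub_nonneg.2 ht)) (mul_nonneg hc2 hh)]
    congr 2
    ring
  have hv_lim (a x : ℝ) (ha : a ≤ T) : Filter.Tendsto
      (fun m : ℕ => vlin c T g (a - 1 / ((m : ℝ) + 1)) x) Filter.atTop
      (nhds (vlin c T g a x)) := by
    have hcont : Continuous fun s => gaussOp 1 0 √((1 + 2 * c) * (T - (a - s))) g x :=
      (continuous_gaussOp_scale 1 0 x hgc hCg).comp (by fun_prop)
    have h1 := (hcont.tendsto 0).comp tendsto_one_div_add_atTop_nhds_zero_nat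
    rw [sub_zero, ← hv_eq a ha] at h1
    refine h1.congr fun m => ?_
    have : (0 : ℝ) < 1 / ((m : ℝ) + 1) := by positivity
    rw [hv_eq _ (by linarith)]
    rfl
  set K := Cg + 3 * M with hKdef
  have hK : 0 ≤ K := (hv (T - 1) (by linarith)).nonneg
  have hC := consConst_nonneg c
  have hS := stabConst_nonneg c
  refine ⟨consConst c * K * T * rexp (stabConst c * T) * √T, 0, fun n _ hn i hi x => ?_⟩
  have hn' : (0 : ℝ) < n := by exact_mod_cast hn
  set h := T / n with hh_def
  have hh : 0 < h := by positivity
  set k := n - i with hk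
  have hkn : (k : ℝ) * h ≤ T := by
    rw [hh_def, ← mul_div_assoc, div_le_iff₀ hn', mul_comm]
    exact mul_le_mul_of_nonneg_left (by exact_mod_cast Nat.sub_le n i) hT.le
  have hti : (i : ℝ) * h = T - k * h := by
    rw [hk, Nat.cast_sub hi, hh_def]
    field_simp
    ring
  have hpow : (1 + stabConst c * h) ^ k ≤ rexp (stabConst c * T) := by
    calc (1 + stabConst c * h) ^ k ≤ rexp (stabConst c * h) ^ k := by
          gcongr
          linarith [Real.add_one_le_exp (stabConst c * h)]
      _ = rexp (stabConst c * (k * h)) := by rw [← Real.exp_nat_mul]; ring_nf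
      _ ≤ _ := by gcongr
  have hrate : consConst c * K * h ^ 2 * (k * (1 + stabConst c * h) ^ k)
      ≤ consConst c * K * T * rexp (stabConst c * T) * √T * √h := by
    have hhT : h ≤ √T * √h := by
      have : h ≤ T := div_le_self hT.le (by exact_mod_cast hn)
      calc h = √h * √h := (Real.mul_self_sqrt hh.le).symm
        _ ≤ √T * √h := by gcongr
    calc consConst c * K * h ^ 2 * (k * (1 + stabConst c * h) ^ k)
        = consConst c * K * (k * h) * (1 + stabConst c * h) ^ k * h := by ring
      _ ≤ consConst c * K * T * rexp (stabConst c * T) * (√T * √h) := by gcongr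
      _ = _ := by ring
  -- The scheme is started from `v(T - 1 / (m + 1), ·)`; the bound does not depend on `m`.
  have hm (m : ℕ) : |linScheme c h (vlin c T g (T - 1 / ((m : ℝ) + 1))) k x
      - vlin c T g (T - k * h - 1 / ((m : ℝ) + 1)) x|
      ≤ consConst c * K * T * rexp (stabConst c * T) * √T * √h := by
    have hpos : (0 : ℝ) < 1 / ((m : ℝ) + 1) := by positivity
    have hlt (j : ℕ) : T - j * h - 1 / ((m : ℝ) + 1) < T := by
      have : 0 ≤ j * h := by positivity
      linarith
    have := scheme_error (v := fun j => vlin c T g (T - j * h - 1 / ((m : ℝ) + 1))) hc hh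
      (fun j => hv _ (hlt j)) (fun j => by
        rw [← hv_step _ h (hlt j).le hh.le]
        congr 1
        push_cast
        ring) k
    have := (this.abs_le x).trans hrate
    simpa only [Nat.cast_zero, zero_mul, sub_zero] using this
  rw [hti]
  have hone (m : ℕ) : T - 1 / ((m : ℝ) + 1) < T := by
    have : (0 : ℝ) < 1 / ((m : ℝ) + 1) := by positivity
    linarith
  have hT_eq : vlin c T g T = g := by
    funext y
    simp [vlin]
  refine le_of_tendsto (((tendsto_linScheme hh (fun m => (hv _ (hone m)).smooth.continuous)
    (fun m => hv_bdd _ (hone m).le) hgc hCg (fun y => ?_) k x).sub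
    (hv_lim (T - k * h) x (by have : 0 ≤ k * h := by positivity
                              linarith))).abs) (.of_forall hm)
  simpa only [hT_eq] using hv_lim T y le_rfl

end
end

section
/- Fix n ≥ 1 and work with real n×n matrices indexed by {1,…,n}. Let A be the upper bidiagonal matrix with A_{ii} = 1 for all i, A_{i,i+1} = −1 for i < n, and all other entries 0; and let B be the shift matrix with B_{i,i+1} = 1 for i < n and all other entries 0. Then A is invertible with (A⁻¹)_{ij} = 1 if j ≥ i and 0 otherwise, and for every k ≥ 1 the k-th power of A⁻¹B is given entrywise by ((A⁻¹B)^k)_{ij} = binomial(j − i − 1, k − 1) if j ≥ i + k and 0 otherwise. -/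
/-!
Left multiplication acts on rows: for a strictly or weakly upper triangular matrix with entries
`f i j`, the `(i, j)` entry of `B * M` is `f (i + 1) j` and that of `A * M` is
`f i j - f (i + 1) j` (`shift_mul_of`, `bidiagonal_mul_of`); the last row needs no separate
treatment because `f` vanishes below the diagonal. Hence `A * T = 1` for the upper triangular
all-ones matrix `T`, which gives the inverse. If `P k` is the claimed `k`-th power, then
`A * P 1 = B`, and `A * P (k + 1) = B * P k` is Pascal's rule. Multiplying by `A⁻¹` turns these
into `P 1 = A⁻¹ * B` and `P (k + 1) = A⁻¹ * B * P k`, so the formula follows by induction.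
-/

open Matrix

/-- Left multiplication by the shift matrix moves every row up by one. The vanishing of `f` below
the diagonal makes the formula correct in the last row as well. -/
lemma shift_mul_of {n : ℕ} (f : ℕ → ℕ → ℝ) (hf : ∀ i j, j < i → f i j = 0) :
    (Matrix.of fun i j : Fin n => if (j : ℕ) = (i : ℕ) + 1 then (1 : ℝ) else 0) *
      (Matrix.of fun i j : Fin n => f i j) = Matrix.of fun i j : Fin n => f (i + 1) j := by
  ext i j
  simp only [Matrix.mul_apply, Matrix.of_apply, ite_mul, one_mul, zero_mul]
  by_cases h : (i : ℕ) + 1 < n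
  · rw [Finset.sum_eq_single (⟨i + 1, h⟩ : Fin n)]
    · simp
    · intro x _ hx
      exact if_neg fun hx' => hx (Fin.ext hx')
    · simp
  · rw [hf _ _ (by omega)]
    exact Finset.sum_eq_zero fun x _ => if_neg (by omega)

/-- The bidiagonal matrix is the identity minus the shift, so left multiplication by it takes
differences of consecutive rows. -/
lemma bidiagonal_mul_of {n : ℕ} (f : ℕ → ℕ → ℝ) (hf : ∀ i j, j < i → f i j = 0) :
    (Matrix.of fun i j : Fin n =>
      if i = j then (1 : ℝ) else if (j : ℕ) = (i : ℕ) + 1 then -1 else 0) *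
      (Matrix.of fun i j : Fin n => f i j) =
        Matrix.of fun i j : Fin n => f i j - f (i + 1) j := by
  have hsub : (Matrix.of fun i j : Fin n =>
      if i = j then (1 : ℝ) else if (j : ℕ) = (i : ℕ) + 1 then -1 else 0) =
      1 - Matrix.of fun i j : Fin n => if (j : ℕ) = (i : ℕ) + 1 then (1 : ℝ) else 0 := by
    ext i j
    by_cases h : i = j
    · subst h
      simp
    · by_cases h' : (j : ℕ) = (i : ℕ) + 1 <;> simp [Matrix.one_apply, h, h']
  rw [hsub, Matrix.sub_mul, Matrix.one_mul, shift_mul_of f hf]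
  rfl

/-- Pascal's rule for the claimed entries, including the boundary cases of the indicator. -/
lemma power_entry_sub (k i j : ℕ) (hk : 1 ≤ k) :
    (if i + (k + 1) ≤ j then ((j - i - 1).choose (k + 1 - 1) : ℝ) else 0) -
      (if i + 1 + (k + 1) ≤ j then ((j - (i + 1) - 1).choose (k + 1 - 1) : ℝ) else 0) =
      if i + 1 + k ≤ j then ((j - (i + 1) - 1).choose (k - 1) : ℝ) else 0 := by
  obtain ⟨m, rfl⟩ : ∃ m, k = m + 1 := ⟨k - 1, by omega⟩
  by_cases h : i + 1 + (m + 1) ≤ j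
  · obtain ⟨d, rfl⟩ : ∃ d, j = i + 1 + (m + 1) + d := ⟨j - (i + 1 + (m + 1)), by omega⟩
    have e1 : i + 1 + (m + 1) + d - i - 1 = (m + d) + 1 := by omega
    have e2 : i + 1 + (m + 1) + d - (i + 1) - 1 = m + d := by omega
    rw [if_pos (by omega), if_pos h, e1, e2, Nat.add_sub_cancel, Nat.add_sub_cancel,
      Nat.choose_succ_succ]
    by_cases hd : d = 0
    · subst hd
      simp
    · rw [if_pos (by omega)]
      push_cast
      ring
  · rw [if_neg (by omega), if_neg (by omega), if_neg h, sub_zero]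

/-- The explicit inverse of the bidiagonal matrix `A` and the entrywise formula for the
powers of `A⁻¹B`, where `A` has `1` on the diagonal, `−1` on the superdiagonal, and `B`
is the superdiagonal shift matrix:
`(A⁻¹)_{ij} = 1_{j ≥ i}` and `((A⁻¹B)^k)_{ij} = C(j−i−1, k−1) 1_{j ≥ i+k}` for `k ≥ 1`. -/
theorem bidiagonal_inverse_and_shift_powers (n : ℕ) (hn : 1 ≤ n)
    (A B : Matrix (Fin n) (Fin n) ℝ)
    (hA : A = Matrix.of fun i j : Fin n =>
      if i = j then (1 : ℝ) else if (j : ℕ) = (i : ℕ) + 1 then -1 else 0)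
    (hB : B = Matrix.of fun i j : Fin n =>
      if (j : ℕ) = (i : ℕ) + 1 then (1 : ℝ) else 0) :
    IsUnit A
    ∧ A⁻¹ = Matrix.of (fun i j : Fin n => if (i : ℕ) ≤ (j : ℕ) then (1 : ℝ) else 0)
    ∧ ∀ k : ℕ, 1 ≤ k →
        (A⁻¹ * B) ^ k = Matrix.of fun i j : Fin n =>
          if (i : ℕ) + k ≤ (j : ℕ)
            then (((j : ℕ) - (i : ℕ) - 1).choose (k - 1) : ℝ)
            else 0 := by
  have hAT : A * Matrix.of (fun i j : Fin n => if (i : ℕ) ≤ (j : ℕ) then (1 : ℝ) else 0) = 1 := by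
    rw [hA, bidiagonal_mul_of (fun i j => if i ≤ j then (1 : ℝ) else 0)
      fun i j h => if_neg (by omega)]
    ext i j
    simp only [Matrix.of_apply, Matrix.one_apply, Fin.ext_iff]
    split_ifs <;> first | omega | norm_num
  have hU : IsUnit A := IsUnit.of_mul_eq_one _ hAT
  have hdet : IsUnit A.det := (Matrix.isUnit_iff_isUnit_det A).1 hU
  refine ⟨hU, Matrix.inv_eq_right_inv hAT, fun k hk => ?_⟩
  induction k, hk using Nat.le_induction with
  | base =>
    rw [pow_one]
    rw [← Matrix.nonsing_inv_mul_cancel_left A (Matrix.of _) hdet]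
    congr 1
    symm
    rw [hA, hB, bidiagonal_mul_of
      (fun i j => if i + 1 ≤ j then ((j - i - 1).choose (1 - 1) : ℝ) else 0)
      fun i j h => if_neg (by omega)]
    ext i j
    simp only [Matrix.of_apply, Nat.sub_self, Nat.choose_zero_right, Nat.cast_one]
    split_ifs <;> first | omega | norm_num
  | succ k hk ih =>
    have key : A * (Matrix.of fun i j : Fin n =>
        if (i : ℕ) + (k + 1) ≤ (j : ℕ)
          then (((j : ℕ) - (i : ℕ) - 1).choose (k + 1 - 1) : ℝ) else 0) =
        B * (A⁻¹ * B) ^ k := by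
      rw [ih, hA, hB, bidiagonal_mul_of
        (fun i j => if i + (k + 1) ≤ j then ((j - i - 1).choose (k + 1 - 1) : ℝ) else 0)
        fun i j h => if_neg (by omega),
        shift_mul_of (fun i j => if i + k ≤ j then ((j - i - 1).choose (k - 1) : ℝ) else 0)
        fun i j h => if_neg (by omega)]
      ext i j
      exact power_entry_sub k i j hk
    rw [pow_succ', Matrix.mul_assoc, ← key, Matrix.nonsing_inv_mul_cancel_left _ _ hdet]
end
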